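/- Let C be a strong divisibility sequence, let p be an ideal prime for C, and write α = α(p). Let n = α·n' + r, m_1 = α·m_1' + r_1, m_2 = α·m_2' + r_2 with n', m_1', m_2' ≥ 0, 0 ≤ r, r_1, r_2 < α, m_1 + m_2 = n, and suppose r_1 + r_2 = r. Then ν_p(binom(n, m_1)_C) = ν_p(binom(n', m_1')), where binom(n', m_1') is the ordinary binomial coefficient. -/

import Mathlib

open Finset

/-- A strong divisibility sequence: nonzero integers `Cs 1, Cs 2, ...` with
`gcd (Cs n) (Cs m) = |Cs (gcd n m)|`. -/
def IsStrongDivSeq (Cs : ℕ → ℤ) : Prop :=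
  (∀ n, 1 ≤ n → Cs n ≠ 0) ∧
  ∀ m n, 1 ≤ m → 1 ≤ n → Int.gcd (Cs n) (Cs m) = (Cs (Nat.gcd n m)).natAbs

/-- `a` is the rank of apparition of `m` in the sequence `Cs`:
the least index `j ≥ 1` such that `m ∣ Cs j`. -/
def IsRank (Cs : ℕ → ℤ) (m a : ℕ) : Prop :=
  1 ≤ a ∧ (m : ℤ) ∣ Cs a ∧ ∀ j, 1 ≤ j → (m : ℤ) ∣ Cs j → a ≤ j

/-- The `C`-orial: `0!_C = 1`, `n!_C = Cs 1 * Cs 2 * ⋯ * Cs n`. -/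
def Corial (Cs : ℕ → ℤ) : ℕ → ℤ
  | 0 => 1
  | n + 1 => Corial Cs n * Cs (n + 1)

/-- `p` is an ideal prime for `Cs`, with `α k` the rank of apparition of `p ^ k`
and parameter `s = s(p)`. -/
def IdealPrime (Cs : ℕ → ℤ) (p : ℕ) (α : ℕ → ℕ) (s : ℕ) : Prop :=
  1 ≤ s ∧ (∀ k, 1 ≤ k → IsRank Cs (p ^ k) (α k)) ∧
  (∀ k, 1 ≤ k → k ≤ s → α k = α 1) ∧
  (∀ k, s < k → α k = p ^ (k - s) * α 1)

/-- The `p`-adic valuation of the `C`-nomial coefficient `binom(n, m)_C`,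
defined as `ν_p(n!_C) - ν_p(m!_C) - ν_p((n-m)!_C)` (an integer). -/
def nuCnomial (p : ℕ) (Cs : ℕ → ℤ) (n m : ℕ) : ℤ :=
  (padicValInt p (Corial Cs n) : ℤ) - (padicValInt p (Corial Cs m) : ℤ)
    - (padicValInt p (Corial Cs (n - m)) : ℤ)

/-!
In a strong divisibility sequence, `q ∣ Cs j` exactly when the rank of apparition of `q` divides
`j`. For an ideal prime `p` with `a = α 1` this makes `ν_p (Cs (a * t)) = s + ν_p t`, while `p`
does not divide the terms whose index is not a multiple of `a`. Multiplying up gives the Legendre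
formula `ν_p (n!_C) = s * ⌊n / a⌋ + ν_p (⌊n / a⌋!)`. When `m₁` and `m₂` are added without a carry
out of the residue modulo `a`, the floors add up, so the terms in `s` cancel in `ν_p` of the
`C`-nomial coefficient and an ordinary binomial coefficient remains.
-/

section

variable {Cs : ℕ → ℤ} {p s : ℕ} {α : ℕ → ℕ}

theorem corial_ne_zero (hCs : ∀ n, 1 ≤ n → Cs n ≠ 0) (n : ℕ) : Corial Cs n ≠ 0 := by
  induction n with
  | zero => exact one_ne_zero
  | succ n ih => exact mul_ne_zero ih (hCs _ n.succ_pos)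

theorem IsStrongDivSeq.dvd_iff_rank_dvd (hC : IsStrongDivSeq Cs) {q a j : ℕ}
    (ha : IsRank Cs q a) (hj : 1 ≤ j) : (q : ℤ) ∣ Cs j ↔ a ∣ j := by
  obtain ⟨ha_pos, hq_dvd, ha_min⟩ := ha
  have hgcd := hC.2 a j ha_pos hj
  constructor
  · intro hqj
    have hq_gcd : (q : ℤ) ∣ Cs (j.gcd a) := by
      rw [Int.natCast_dvd, ← hgcd]
      exact Int.dvd_gcd hqj hq_dvd
    have ha_le : a ≤ j.gcd a := ha_min _ (Nat.gcd_pos_of_pos_left a hj) hq_gcd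
    exact Nat.gcd_eq_right_iff_dvd.mp ((Nat.gcd_le_right j ha_pos).antisymm ha_le)
  · intro haj
    rw [Nat.gcd_eq_right haj] at hgcd
    have ha_dvd : Cs a ∣ Cs j := by
      rw [← Int.natAbs_dvd, ← hgcd]
      exact Int.gcd_dvd_left _ _
    exact hq_dvd.trans ha_dvd

theorem padicValNat_factorial_add [Fact p.Prime] (a b : ℕ) :
    padicValNat p (a + b).factorial =
      padicValNat p ((a + b).choose a) + padicValNat p a.factorial + padicValNat p b.factorial := by
  have hchoose : (a + b).choose a ≠ 0 := (Nat.choose_pos (Nat.le_add_right a b)).ne'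
  have ha := a.factorial_ne_zero
  rw [← Nat.add_choose_mul_factorial_mul_factorial a b, ← Nat.choose_symm_add,
    padicValNat.mul (mul_ne_zero hchoose ha) b.factorial_ne_zero, padicValNat.mul hchoose ha]

namespace IdealPrime

theorem rank_one_pos (hid : IdealPrime Cs p α s) : 0 < α 1 :=
  (hid.2.1 1 le_rfl).1

-- Truncated subtraction merges the two cases of the definition: the exponent is `0` for `k ≤ s`.
theorem rank_eq (hid : IdealPrime Cs p α s) {k : ℕ} (hk : 1 ≤ k) :
    α k = p ^ (k - s) * α 1 := by
  obtain ⟨-, -, rank_of_le, rank_of_lt⟩ := hid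
  rcases le_or_gt k s with hks | hks
  · rw [rank_of_le k hk hks, Nat.sub_eq_zero_of_le hks, pow_zero, one_mul]
  · exact rank_of_lt k hks

theorem padicValInt_rank_mul [Fact p.Prime] (hid : IdealPrime Cs p α s) (hC : IsStrongDivSeq Cs)
    {t : ℕ} (ht : t ≠ 0) : padicValInt p (Cs (α 1 * t)) = s + padicValNat p t := by
  have hindex : 1 ≤ α 1 * t := Nat.mul_pos hid.rank_one_pos (Nat.pos_of_ne_zero ht)
  refine eq_of_forall_le_iff fun k ↦ ?_
  rcases k.eq_zero_or_pos with rfl | hk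
  · simp only [zero_le]
  calc k ≤ padicValInt p (Cs (α 1 * t))
      ↔ ((p ^ k : ℕ) : ℤ) ∣ Cs (α 1 * t) := by
        rw [Nat.cast_pow, padicValInt_dvd_iff, or_iff_right (hC.1 _ hindex)]
    _ ↔ α k ∣ α 1 * t := hC.dvd_iff_rank_dvd (hid.2.1 k hk) hindex
    _ ↔ p ^ (k - s) ∣ t := by
        rw [hid.rank_eq hk, mul_comm, Nat.mul_dvd_mul_iff_left hid.rank_one_pos]
    _ ↔ k ≤ s + padicValNat p t := by
        rw [padicValNat_dvd_iff_le ht, tsub_le_iff_left]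

theorem padicValInt_eq_zero_of_not_rank_dvd (hid : IdealPrime Cs p α s)
    (hC : IsStrongDivSeq Cs) {j : ℕ} (hj : 1 ≤ j) (hdvd : ¬ α 1 ∣ j) :
    padicValInt p (Cs j) = 0 := by
  have hrank : IsRank Cs p (α 1) := by simpa only [pow_one] using hid.2.1 1 le_rfl
  exact padicValInt.eq_zero_of_not_dvd (mt (hC.dvd_iff_rank_dvd hrank hj).mp hdvd)

theorem padicValInt_corial [Fact p.Prime] (hid : IdealPrime Cs p α s) (hC : IsStrongDivSeq Cs)
    (n : ℕ) :
    padicValInt p (Corial Cs n) = s * (n / α 1) + padicValNat p (n / α 1).factorial := by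
  induction n with
  | zero => simp [Corial]
  | succ n ih =>
    rw [Corial, padicValInt.mul (corial_ne_zero hC.1 n) (hC.1 _ n.succ_pos), ih]
    by_cases hdvd : α 1 ∣ n + 1
    · have hquot : (n + 1) / α 1 = n / α 1 + 1 := Nat.succ_div_of_dvd hdvd
      have hterm : padicValInt p (Cs (n + 1)) = s + padicValNat p (n / α 1 + 1) := by
        rw [← hid.padicValInt_rank_mul hC (n / α 1).add_one_ne_zero, ← hquot,
          Nat.mul_div_cancel' hdvd]
      rw [hterm, hquot, Nat.factorial_succ,
        padicValNat.mul (Nat.succ_ne_zero _) (Nat.factorial_ne_zero _)]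
      ring
    · rw [hid.padicValInt_eq_zero_of_not_rank_dvd hC n.succ_pos hdvd, add_zero,
        Nat.succ_div_of_not_dvd hdvd]

theorem nuCnomial_add_of_mod_add_mod_lt [Fact p.Prime] (hid : IdealPrime Cs p α s)
    (hC : IsStrongDivSeq Cs) {m₁ m₂ : ℕ} (hcarry : m₁ % α 1 + m₂ % α 1 < α 1) :
    nuCnomial p Cs (m₁ + m₂) m₁ = padicValNat p ((m₁ / α 1 + m₂ / α 1).choose (m₁ / α 1)) := by
  rw [nuCnomial, Nat.add_sub_cancel_left, hid.padicValInt_corial hC, hid.padicValInt_corial hC,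
    hid.padicValInt_corial hC, Nat.add_div_eq_of_add_mod_lt hcarry, padicValNat_factorial_add]
  push_cast
  ring

end IdealPrime

end

theorem stmt8 (Cs : ℕ → ℤ) (p : ℕ) (hp : p.Prime) (α : ℕ → ℕ) (s : ℕ)
    (hC : IsStrongDivSeq Cs) (hid : IdealPrime Cs p α s)
    (n n' r m1 m1' r1 m2 m2' r2 : ℕ)
    (hn : n = α 1 * n' + r) (hm1 : m1 = α 1 * m1' + r1) (hm2 : m2 = α 1 * m2' + r2)
    (hr : r < α 1) (hr1 : r1 < α 1) (hr2 : r2 < α 1) (hsum : m1 + m2 = n)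
    (hr12 : r1 + r2 = r) :
    nuCnomial p Cs n m1 = (padicValNat p (Nat.choose n' m1') : ℤ) := by
  have := Fact.mk hp
  have hpos := hid.rank_one_pos
  have hdiv : n / α 1 = n' := ((Nat.div_mod_unique hpos).mpr ⟨by rw [hn, add_comm], hr⟩).1
  obtain ⟨hdiv1, hmod1⟩ : m1 / α 1 = m1' ∧ m1 % α 1 = r1 :=
    (Nat.div_mod_unique hpos).mpr ⟨by rw [hm1, add_comm], hr1⟩
  obtain ⟨hdiv2, hmod2⟩ : m2 / α 1 = m2' ∧ m2 % α 1 = r2 :=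
    (Nat.div_mod_unique hpos).mpr ⟨by rw [hm2, add_comm], hr2⟩
  have hcarry : m1 % α 1 + m2 % α 1 < α 1 := by rwa [hmod1, hmod2, hr12]
  have hn' : m1' + m2' = n' := by
    rw [← hdiv1, ← hdiv2, ← hdiv, ← hsum, Nat.add_div_eq_of_add_mod_lt hcarry]
  rw [← hsum, hid.nuCnomial_add_of_mod_add_mod_lt hC hcarry, hdiv1, hdiv2, hn']
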